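/- Suppose $\{v_n\}$ is a $\gamma$-uniformly distributed sequence in the torus $\mathbb{T}^d$, $d \geq 2$, with $\gamma \in (0, 1/2]$. For $\frac{1}{100} \leq a \leq b < \frac{1}{2}$, let $A_{[a,b]} = \{x \in \mathbb{T}^d : a \leq \|x\| \leq b\}$ where $\|x\|$ is the distance from $x$ to the lattice $\mathbb{Z}^d$. Then $\#\{(n,m) \in [1,N]^2 : a \leq \|v_n - v_m\| \leq b\} = N^2 |A_{[a,b]}| + R(a,b,N)$, where for every $\epsilon > 0$ there is $C_\epsilon > 0$ (independent of $a, b$) with $|R(a,b,N)| \leq C_\epsilon N^{2 - \frac{4\gamma}{d+1} + \epsilon}$. -/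

import Mathlib

open Finset MeasureTheory

/-- Euclidean norm of an integer vector `k ∈ ℤ^d`. -/
noncomputable def intNorm {d : ℕ} (k : Fin d → ℤ) : ℝ :=
  Real.sqrt (∑ i, ((k i : ℝ)) ^ 2)

/-- The toral (Euclidean) norm on `𝕋^d = (ℝ/ℤ)^d`: the distance to the lattice `ℤ^d`. -/
noncomputable def torusNorm {d : ℕ} (x : Fin d → AddCircle (1:ℝ)) : ℝ :=
  Real.sqrt (∑ i, ‖x i‖ ^ 2)

/-- A sequence in `𝕋^d` is `γ`-uniformly distributed if for every `ε > 0` there is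
`C_ε > 0` with `|N⁻¹ ∑_{n=1}^N e^{2πi k·v_n}| ≤ C_ε |k|^ε N^{-γ}` for every nonzero
`k ∈ ℤ^d` and every `N ≥ 1`. -/
def IsGammaUDTorus {d : ℕ} (γ : ℝ) (v : ℕ → Fin d → AddCircle (1:ℝ)) : Prop :=
  ∀ ε : ℝ, 0 < ε → ∃ C : ℝ, 0 < C ∧ ∀ k : Fin d → ℤ, k ≠ 0 → ∀ N : ℕ, 1 ≤ N →
    ‖(N : ℂ)⁻¹ * ∑ n ∈ Finset.range N, ∏ i, fourier (k i) (v n i)‖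
      ≤ C * intNorm k ^ ε * (N : ℝ) ^ (-γ)

/-!
Let `S_N(k)` be the exponential sum of the sequence at frequency `k`. The indicator of the annulus
`A` is at most the indicator of its `3h`-thickening averaged twice over cubes of half-width `h`; the
same majorant for `Aᶜ` gives a minorant for `A`. Expanding in Fourier series, the number of pairs
with `v_n - v_m ∈ A` differs from `N² |A|` by at most `N²` times the volume `O(h)` of a boundary
layer, plus `∑_{k ≠ 0} |f̂(k)| |m_h(k)|² |S_N(k)|²`, where `f` is the indicator of a thickening and
`m_h` the Fourier multiplier of the average.

Since `|S_N(k)|²` is at most `N^{2-2γ}` times a small power of `|k|`, it remains to bound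
`∑ |f̂(k)| |m_h(k)|²` with that weight. Passing from scale `2h` to scale `h` costs
`∑ |f̂| |m_h - m_{2h}| (|m_h| + |m_{2h}|)`. By Parseval `f̂ (m_h - m_{2h})` has `ℓ²` norm
`O(h^{1/2})`, because averaging changes `f` only in a boundary layer, while `m_h` has `ℓ²` norm
about `h^{-d/2}`. Cauchy–Schwarz and summation over dyadic scales give `h^{-(d-1)/2}` up to a small
power of `h`, and `h = N^{-4γ/(d+1)}` balances `N² h` against `N^{2-2γ} h^{-(d-1)/2}`.
-/

open UnitAddTorus AddCircle ComplexConjugate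
open scoped Convolution ENNReal

section Fourier

variable {ι : Type*} [Fintype ι]

lemma volume_unitAddTorus_eq_pi_haarAddCircle :
    (volume : Measure (UnitAddTorus ι)) = Measure.pi fun _ ↦ haarAddCircle := by
  have volume_circle : (volume : Measure UnitAddCircle) = haarAddCircle := by
    rw [volume_eq_smul_haarAddCircle, ENNReal.ofReal_one, one_smul]
  rw [volume_pi, volume_circle]

instance : IsProbabilityMeasure (volume : Measure (UnitAddTorus ι)) := by
  rw [volume_unitAddTorus_eq_pi_haarAddCircle]
  infer_instance

instance : (volume : Measure (UnitAddTorus ι)).IsNegInvariant :=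
  Measure.IsAddHaarMeasure.isNegInvariant_of_regular _

lemma norm_mFourier_apply (k : ι → ℤ) (x : UnitAddTorus ι) : ‖mFourier k x‖ = 1 := by
  simp only [mFourier, fourier_apply, ContinuousMap.coe_mk, norm_prod, Circle.norm_coe,
    prod_const_one]

lemma mFourier_apply_add (k : ι → ℤ) (x y : UnitAddTorus ι) :
    mFourier k (x + y) = mFourier k x * mFourier k y := by
  simp [mFourier, fourier_apply, toCircle_add, prod_mul_distrib]

lemma mFourier_apply_neg (k : ι → ℤ) (x : UnitAddTorus ι) :
    mFourier k (-x) = conj (mFourier k x) := by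
  rw [← mFourier_neg]
  simp [mFourier, fourier_apply]

lemma integrable_mFourier_smul {E : Type*} [NormedAddCommGroup E] [NormedSpace ℂ E]
    {f : UnitAddTorus ι → E} (hf : Integrable f) (k : ι → ℤ) :
    Integrable fun x ↦ mFourier k x • f x :=
  hf.bdd_smul 1 (mFourier k).continuous.aestronglyMeasurable
    (ae_of_all _ fun x ↦ (norm_mFourier_apply k x).le)

lemma mFourierCoeff_eq_integral_volume {E : Type*} [NormedAddCommGroup E] [NormedSpace ℂ E]
    (f : UnitAddTorus ι → E) (k : ι → ℤ) :
    mFourierCoeff f k = ∫ x, mFourier (-k) x • f x := by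
  rw [volume_unitAddTorus_eq_pi_haarAddCircle]
  rfl

lemma mFourierCoeff_zero {E : Type*} [NormedAddCommGroup E] [NormedSpace ℂ E]
    (f : UnitAddTorus ι → E) : mFourierCoeff f 0 = ∫ x, f x := by
  simp [mFourierCoeff_eq_integral_volume, mFourier_zero]

lemma norm_mFourierCoeff_le {E : Type*} [NormedAddCommGroup E] [NormedSpace ℂ E]
    (f : UnitAddTorus ι → E) (k : ι → ℤ) : ‖mFourierCoeff f k‖ ≤ ∫ x, ‖f x‖ := by
  rw [mFourierCoeff_eq_integral_volume]
  refine (norm_integral_le_integral_norm _).trans_eq ?_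
  simp only [norm_smul, norm_mFourier_apply, one_mul]

lemma mFourierCoeff_prod_apply (f : ι → UnitAddCircle → ℂ) (k : ι → ℤ) :
    mFourierCoeff (fun x ↦ ∏ i, f i (x i)) k = ∏ i, fourierCoeff (f i) (k i) := by
  rw [mFourierCoeff_eq_integral_volume, volume_unitAddTorus_eq_pi_haarAddCircle]
  simp only [fourierCoeff, smul_eq_mul]
  rw [← integral_fintype_prod_eq_prod]
  simp [mFourier, prod_mul_distrib]

lemma hasSum_conj_mFourierCoeff_mul {f g : UnitAddTorus ι → ℂ} (hf : MemLp f 2)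
    (hg : MemLp g 2) :
    HasSum (fun k ↦ conj (mFourierCoeff f k) * mFourierCoeff g k) (∫ x, conj (f x) * g x) := by
  rw [volume_unitAddTorus_eq_pi_haarAddCircle] at hf hg ⊢
  have coeff_toLp {u : UnitAddTorus ι → ℂ} (hu : MemLp u 2 (Measure.pi fun _ ↦ haarAddCircle))
      (k : ι → ℤ) : mFourierCoeff (hu.toLp u) k = mFourierCoeff u k :=
    integral_congr_ae (hu.coeFn_toLp.mono fun x hx ↦ by simp only [hx])
  have parseval := hasSum_prod_mFourierCoeff (hf.toLp f) (hg.toLp g)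
  simp only [coeff_toLp] at parseval
  convert! parseval using 1
  refine integral_congr_ae ?_
  filter_upwards [hf.coeFn_toLp, hg.coeFn_toLp] with x hfx hgx
  rw [hfx, hgx]

lemma hasSum_norm_mFourierCoeff_sq {f : UnitAddTorus ι → ℂ} (hf : MemLp f 2) :
    HasSum (fun k ↦ ‖mFourierCoeff f k‖ ^ 2) (∫ x, ‖f x‖ ^ 2) := by
  have parseval := Complex.hasSum_re (hasSum_conj_mFourierCoeff_mul hf hf)
  simp only [Complex.conj_mul', ← Complex.ofReal_pow] at parseval
  simpa only [integral_complex_ofReal, Complex.ofReal_re] using parseval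

-- A character twists a convolution into the convolution of the twisted functions.
lemma mFourierCoeff_convolution {f g : UnitAddTorus ι → ℂ} (hf : Integrable f)
    (hg : Integrable g) (k : ι → ℤ) :
    mFourierCoeff (f ⋆[.mul ℂ ℂ] g) k = mFourierCoeff f k * mFourierCoeff g k := by
  set χ : UnitAddTorus ι → ℂ := ⇑(mFourier (-k))
  have integrable_twist {u : UnitAddTorus ι → ℂ} (hu : Integrable u) :
      Integrable fun x ↦ χ x * u x :=
    integrable_mFourier_smul hu (-k)
  have twist_convolution (x : UnitAddTorus ι) :
      χ x * (f ⋆[.mul ℂ ℂ] g) x =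
        ((fun y ↦ χ y * f y) ⋆[.mul ℂ ℂ] fun y ↦ χ y * g y) x := by
    simp only [convolution_mul, ← integral_const_mul]
    refine integral_congr_ae (ae_of_all _ fun t ↦ ?_)
    have hχ : χ x = χ t * χ (x - t) := by
      rw [← mFourier_apply_add, add_sub_cancel]
    simp only [hχ]
    ring
  simp only [mFourierCoeff_eq_integral_volume, smul_eq_mul]
  calc ∫ x, χ x * (f ⋆[.mul ℂ ℂ] g) x
      = ∫ x, ((fun y ↦ χ y * f y) ⋆[.mul ℂ ℂ] fun y ↦ χ y * g y) x := by
        simp only [twist_convolution]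
    _ = (∫ x, χ x * f x) * ∫ x, χ x * g x :=
        integral_convolution _ (integrable_twist hf) (integrable_twist hg)

-- Parseval for `f` and the conjugate reflected translate of `g`.
lemma hasSum_mFourier_convolution {f g : UnitAddTorus ι → ℂ} (hf : MemLp f 2) (hg : MemLp g 2)
    (x : UnitAddTorus ι) :
    HasSum (fun k ↦ mFourierCoeff f k * mFourierCoeff g k * mFourier k x)
      ((f ⋆[.mul ℂ ℂ] g) x) := by
  set u : UnitAddTorus ι → ℂ := fun t ↦ conj (g (x - t))
  have hu : MemLp u 2 := (hg.comp_measurePreserving (volume.measurePreserving_sub_left x)).star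
  have coeff_u (k : ι → ℤ) :
      conj (mFourierCoeff u k) = mFourierCoeff g k * mFourier k x := by
    simp only [mFourierCoeff_eq_integral_volume, smul_eq_mul, ← integral_conj,
      ← integral_mul_const]
    rw [← integral_sub_left_eq_self _ volume x]
    refine integral_congr_ae (ae_of_all _ fun t ↦ ?_)
    have mFourier_sub : mFourier k (x - t) = mFourier k x * conj (mFourier k t) := by
      rw [sub_eq_add_neg, mFourier_apply_add, mFourier_apply_neg]
    simp only [u, sub_sub_cancel, map_mul, Complex.conj_conj, mFourier_neg, mFourier_sub]
    ring
  convert! hasSum_conj_mFourierCoeff_mul hu hf using 1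
  · ext k
    rw [coeff_u]
    ring
  · simp only [u, convolution_mul, Complex.conj_conj, mul_comm]

/-- The Fourier coefficient of a real-valued function on the torus, which keeps the coercion to `ℂ`
out of the statements about indicator functions. -/
noncomputable def realFourierCoeff (f : UnitAddTorus ι → ℝ) (k : ι → ℤ) : ℂ :=
  mFourierCoeff (fun x ↦ (f x : ℂ)) k

lemma ofReal_convolution (f g : UnitAddTorus ι → ℝ) (x : UnitAddTorus ι) :
    (((f ⋆ g) x : ℝ) : ℂ) = ((fun y ↦ (f y : ℂ)) ⋆[.mul ℂ ℂ] fun y ↦ (g y : ℂ)) x := by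
  simp only [convolution_lsmul, convolution_mul, ← integral_complex_ofReal, smul_eq_mul,
    Complex.ofReal_mul]

lemma realFourierCoeff_zero (f : UnitAddTorus ι → ℝ) :
    realFourierCoeff f 0 = ((∫ x, f x : ℝ) : ℂ) := by
  rw [realFourierCoeff, mFourierCoeff_zero, integral_complex_ofReal]

lemma realFourierCoeff_sub {f g : UnitAddTorus ι → ℝ} (hf : Integrable f) (hg : Integrable g)
    (k : ι → ℤ) :
    realFourierCoeff (fun x ↦ f x - g x) k = realFourierCoeff f k - realFourierCoeff g k := by
  have integrable_twist {u : UnitAddTorus ι → ℝ} (hu : Integrable u) :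
      Integrable fun x ↦ mFourier (-k) x • (u x : ℂ) :=
    integrable_mFourier_smul hu.ofReal (-k)
  simp only [realFourierCoeff, mFourierCoeff_eq_integral_volume, Complex.ofReal_sub, smul_sub]
  exact integral_sub (integrable_twist hf) (integrable_twist hg)

lemma norm_realFourierCoeff_le (f : UnitAddTorus ι → ℝ) (k : ι → ℤ) :
    ‖realFourierCoeff f k‖ ≤ ∫ x, |f x| := by
  simpa only [realFourierCoeff, Complex.norm_real] using!
    norm_mFourierCoeff_le (fun x ↦ (f x : ℂ)) k

lemma realFourierCoeff_convolution {f g : UnitAddTorus ι → ℝ} (hf : Integrable f)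
    (hg : Integrable g) (k : ι → ℤ) :
    realFourierCoeff (f ⋆ g) k = realFourierCoeff f k * realFourierCoeff g k := by
  simp only [realFourierCoeff, ofReal_convolution]
  exact mFourierCoeff_convolution hf.ofReal hg.ofReal k

lemma hasSum_realFourierCoeff_convolution {f g : UnitAddTorus ι → ℝ} (hf : MemLp f 2)
    (hg : MemLp g 2) (x : UnitAddTorus ι) :
    HasSum (fun k ↦ realFourierCoeff f k * realFourierCoeff g k * mFourier k x)
      ((f ⋆ g) x : ℂ) := by
  rw [ofReal_convolution]
  exact hasSum_mFourier_convolution hf.ofReal hg.ofReal x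

lemma hasSum_norm_realFourierCoeff_sq {f : UnitAddTorus ι → ℝ} (hf : MemLp f 2) :
    HasSum (fun k ↦ ‖realFourierCoeff f k‖ ^ 2) (∫ x, f x ^ 2) := by
  simpa only [realFourierCoeff, Complex.norm_real, Real.norm_eq_abs, sq_abs] using!
    hasSum_norm_mFourierCoeff_sq (f := fun x ↦ (f x : ℂ)) hf.ofReal

end Fourier

section BallKernel

variable {X : Type*} [SeminormedAddCommGroup X] [MeasureSpace X]

/-- The indicator function of the closed ball of radius `h` around the origin, normalised to have
integral `1`. On the torus the norm is the supremum norm, so the ball is a cube. -/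
noncomputable def ballKernel (h : ℝ) : X → ℝ :=
  (Metric.closedBall 0 h).indicator fun _ ↦ (volume.real (Metric.closedBall (0 : X) h))⁻¹

variable [BorelSpace X]

/-- The average `x ↦ ⨍ y ∈ closedBall x h, f y` of `f` at scale `h`. -/
noncomputable def ballAverage (h : ℝ) (f : X → ℝ) : X → ℝ :=
  ballKernel h ⋆ f

lemma ballAverage_apply (h : ℝ) (f : X → ℝ) (x : X) :
    ballAverage h f x = ⨍ t in Metric.closedBall 0 h, f (x - t) := by
  rw [ballAverage, convolution_lsmul, setAverage_eq, ← integral_smul,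
    ← integral_indicator measurableSet_closedBall]
  refine integral_congr_ae (ae_of_all _ fun t ↦ ?_)
  by_cases ht : t ∈ Metric.closedBall 0 h <;> simp [ballKernel, ht]

variable [IsFiniteMeasure (volume : Measure X)]

lemma memLp_ballKernel (h : ℝ) (p : ℝ≥0∞) : MemLp (ballKernel h : X → ℝ) p :=
  memLp_indicator_const p measurableSet_closedBall _ (Or.inr (measure_ne_top _ _))

lemma integrable_ballKernel (h : ℝ) : Integrable (ballKernel h : X → ℝ) :=
  memLp_one_iff_integrable.mp (memLp_ballKernel h 1)

variable [(volume : Measure X).IsOpenPosMeasure]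

lemma integral_ballKernel {h : ℝ} (hh : 0 < h) : ∫ x : X, ballKernel h x = 1 := by
  rw [ballKernel, integral_indicator_const _ measurableSet_closedBall, smul_eq_mul,
    mul_inv_cancel₀]
  rw [measureReal_ne_zero_iff]
  exact (Metric.measure_closedBall_pos volume 0 hh).ne'

variable [(volume : Measure X).IsAddLeftInvariant] [(volume : Measure X).IsNegInvariant]

lemma ballAverage_mem {h : ℝ} (hh : 0 < h) {f : X → ℝ} (hf : Integrable f) {s : Set ℝ}
    (hs : Convex ℝ s) (hs' : IsClosed s) {x : X} (hfs : ∀ y, ‖x - y‖ ≤ h → f y ∈ s) :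
    ballAverage h f x ∈ s := by
  rw [ballAverage_apply]
  refine hs.set_average_mem hs' (Metric.measure_closedBall_pos _ _ hh).ne' (measure_ne_top _ _)
    ?_ (hf.comp_sub_left x).integrableOn
  filter_upwards [ae_restrict_mem measurableSet_closedBall] with t ht
  exact hfs _ (by simpa using ht)

lemma ballAverage_eq_of_forall_norm_le {h : ℝ} (hh : 0 < h) {f : X → ℝ} (hf : Integrable f)
    {c : ℝ} {x : X} (hfc : ∀ y, ‖x - y‖ ≤ h → f y = c) : ballAverage h f x = c :=
  ballAverage_mem hh hf (convex_singleton c) isClosed_singleton hfc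

end BallKernel

section TorusAverage

variable {ι : Type*} [Fintype ι]

/-- The Fourier multiplier of averaging over cubes of half-width `h`. -/
noncomputable def ballMultiplier (h : ℝ) (k : ι → ℤ) : ℂ :=
  realFourierCoeff (ballKernel h) k

lemma ballMultiplier_zero {h : ℝ} (hh : 0 < h) : ballMultiplier h (0 : ι → ℤ) = 1 := by
  rw [ballMultiplier, realFourierCoeff_zero, integral_ballKernel hh, Complex.ofReal_one]

lemma realFourierCoeff_ballAverage (h : ℝ) {f : UnitAddTorus ι → ℝ} (hf : Integrable f)
    (k : ι → ℤ) :
    realFourierCoeff (ballAverage h f) k = ballMultiplier h k * realFourierCoeff f k :=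
  realFourierCoeff_convolution (integrable_ballKernel h) hf k

lemma integrable_ballAverage (h : ℝ) {f : UnitAddTorus ι → ℝ} (hf : Integrable f) :
    Integrable (ballAverage h f) :=
  (integrable_ballKernel h).integrable_convolution _ hf

lemma ballAverage_mem_Icc {h : ℝ} (hh : 0 < h) {f : UnitAddTorus ι → ℝ} (hf : Integrable f)
    {a b : ℝ} (hab : ∀ x, f x ∈ Set.Icc a b) (x : UnitAddTorus ι) :
    ballAverage h f x ∈ Set.Icc a b :=
  ballAverage_mem hh hf (convex_Icc a b) isClosed_Icc fun y _ ↦ hab y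

/-- A function averaged twice at scale `h`. The squared multiplier makes its Fourier series
absolutely summable. -/
noncomputable def smoothing (h : ℝ) (f : UnitAddTorus ι → ℝ) : UnitAddTorus ι → ℝ :=
  ballAverage h (ballAverage h f)

lemma sum_norm_realFourierCoeff_sq_le {g : UnitAddTorus ι → ℝ} (hg : AEStronglyMeasurable g)
    {E : Set (UnitAddTorus ι)} (hE : MeasurableSet E) (hgE : ∀ x, |g x| ≤ E.indicator 1 x)
    (s : Finset (ι → ℤ)) : ∑ k ∈ s, ‖realFourierCoeff g k‖ ^ 2 ≤ volume.real E := by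
  have memLp_g : MemLp g 2 :=
    (memLp_indicator_const 2 hE (1 : ℝ) (Or.inr (measure_ne_top _ _))).mono hg
      (ae_of_all _ fun x ↦ (hgE x).trans (le_abs_self _))
  have sq_g_le (x : UnitAddTorus ι) : g x ^ 2 ≤ E.indicator 1 x := by
    rw [← sq_abs]
    refine (pow_le_pow_left₀ (abs_nonneg _) (hgE x) 2).trans_eq ?_
    by_cases hx : x ∈ E <;> simp [hx]
  calc ∑ k ∈ s, ‖realFourierCoeff g k‖ ^ 2
      ≤ ∫ x, g x ^ 2 :=
        sum_le_hasSum s (fun _ _ ↦ sq_nonneg _) (hasSum_norm_realFourierCoeff_sq memLp_g)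
    _ ≤ ∫ x, E.indicator 1 x :=
        integral_mono memLp_g.integrable_sq ((integrable_const 1).indicator hE) sq_g_le
    _ = volume.real E := integral_indicator_one hE

lemma abs_ballAverage_sub_ballAverage_le_indicator {f : UnitAddTorus ι → ℝ} (hf : Integrable f)
    (hf01 : ∀ x, f x ∈ Set.Icc 0 1) {E : Set (UnitAddTorus ι)} {h h' r : ℝ} (hh : 0 < h)
    (hhr : h ≤ r) (hh' : 0 < h') (hhr' : h' ≤ r) (hfE : ∀ x ∉ E, ∀ y, ‖x - y‖ ≤ r → f y = f x)
    (x : UnitAddTorus ι) : |ballAverage h f x - ballAverage h' f x| ≤ E.indicator 1 x := by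
  by_cases hx : x ∈ E
  · rw [Set.indicator_of_mem hx]
    exact Real.dist_le_of_mem_Icc_01 (ballAverage_mem_Icc hh hf hf01 x)
      (ballAverage_mem_Icc hh' hf hf01 x)
  · rw [Set.indicator_of_notMem hx,
      ballAverage_eq_of_forall_norm_le hh hf fun y hy ↦ hfE x hx y (hy.trans hhr),
      ballAverage_eq_of_forall_norm_le hh' hf fun y hy ↦ hfE x hx y (hy.trans hhr'), sub_self,
      abs_zero]

lemma sum_sq_realFourierCoeff_mul_ballMultiplier_sub_le {f : UnitAddTorus ι → ℝ}
    (hf : Integrable f) (hf01 : ∀ x, f x ∈ Set.Icc 0 1) {E : Set (UnitAddTorus ι)}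
    (hE : MeasurableSet E) {h h' r : ℝ} (hh : 0 < h) (hhr : h ≤ r) (hh' : 0 < h') (hhr' : h' ≤ r)
    (hfE : ∀ x ∉ E, ∀ y, ‖x - y‖ ≤ r → f y = f x) (s : Finset (ι → ℤ)) :
    ∑ k ∈ s, (‖realFourierCoeff f k‖ * ‖ballMultiplier h k - ballMultiplier h' k‖) ^ 2
      ≤ volume.real E := by
  have hAf := integrable_ballAverage h hf
  have hAf' := integrable_ballAverage h' hf
  have coeff_sub (k : ι → ℤ) :
      ‖realFourierCoeff f k‖ * ‖ballMultiplier h k - ballMultiplier h' k‖ =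
        ‖realFourierCoeff (fun x ↦ ballAverage h f x - ballAverage h' f x) k‖ := by
    rw [realFourierCoeff_sub hAf hAf', realFourierCoeff_ballAverage h hf,
      realFourierCoeff_ballAverage h' hf, ← sub_mul, norm_mul, mul_comm]
  simp only [coeff_sub]
  exact sum_norm_realFourierCoeff_sq_le (hAf.sub hAf').1 hE
    (abs_ballAverage_sub_ballAverage_le_indicator hf hf01 hh hhr hh' hhr' hfE) s

end TorusAverage

section Multiplier

lemma ballKernel_coe {h : ℝ} (hh : 0 < h) (hh2 : h ≤ 1 / 2) {x : ℝ} (hx : |x| ≤ 1 / 2) :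
    ballKernel h (x : UnitAddCircle) = (Set.Icc (-h) h).indicator (fun _ ↦ (2 * h)⁻¹) x := by
  have volume_ball : volume.real (Metric.closedBall (0 : UnitAddCircle) h) = 2 * h := by
    rw [measureReal_def, volume_closedBall, min_eq_right (by linarith),
      ENNReal.toReal_ofReal (by positivity)]
  have norm_x : ‖(x : UnitAddCircle)‖ = |x| :=
    (norm_coe_eq_abs_iff 1 one_ne_zero).mpr (by rwa [abs_one])
  simp only [ballKernel, volume_ball, Set.indicator, mem_closedBall_zero_iff, norm_x,
    Set.mem_Icc, abs_le]

lemma fourierCoeff_ballKernel {h : ℝ} (hh : 0 < h) (hh2 : h ≤ 1 / 2) (k : ℤ) :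
    fourierCoeff (fun x : UnitAddCircle ↦ (ballKernel h x : ℂ)) k =
      (2 * h)⁻¹ * ∫ x : ℝ in -h..h, fourier (-k) (x : UnitAddCircle) := by
  have integrand_eq (x : ℝ) (hx : x ∈ Set.uIcc (-(1 / 2)) (-(1 / 2) + 1 : ℝ)) :
      fourier (-k) (x : UnitAddCircle) • (ballKernel h (x : UnitAddCircle) : ℂ) =
        (Set.Icc (-h) h).indicator
          (fun x : ℝ ↦ ((2 * h)⁻¹ : ℂ) * fourier (-k) (x : UnitAddCircle)) x := by
    rw [Set.uIcc_of_le (by norm_num)] at hx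
    rw [ballKernel_coe hh hh2 (abs_le.mpr ⟨hx.1, by linarith [hx.2]⟩)]
    by_cases hxh : x ∈ Set.Icc (-h) h <;> simp [hxh, mul_comm]
  have inter_eq : Set.Ioc (-(1 / 2)) (-(1 / 2) + 1) ∩ Set.Ioc (-h) h = Set.Ioc (-h) h :=
    Set.inter_eq_right.mpr (Set.Ioc_subset_Ioc (by linarith) (by linarith))
  rw [fourierCoeff_eq_intervalIntegral _ _ (-(1 / 2)), intervalIntegral.integral_congr integrand_eq,
    intervalIntegral.integral_of_le (by linarith), intervalIntegral.integral_of_le (by linarith),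
    setIntegral_indicator measurableSet_Icc,
    setIntegral_congr_set (Filter.EventuallyEq.rfl.inter Ioc_ae_eq_Icc.symm), inter_eq,
    integral_const_mul]
  simp

lemma norm_fourierCoeff_ballKernel_le_one {h : ℝ} (hh : 0 < h) (hh2 : h ≤ 1 / 2) (k : ℤ) :
    ‖fourierCoeff (fun x : UnitAddCircle ↦ (ballKernel h x : ℂ)) k‖ ≤ 1 := by
  have norm_integral_le : ‖∫ x : ℝ in -h..h, fourier (-k) (x : UnitAddCircle)‖ ≤ 2 * h := by
    refine (intervalIntegral.norm_integral_le_of_norm_le_const (C := 1) fun x _ ↦ ?_).trans_eq ?_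
    · exact (Circle.norm_coe _).le
    · rw [sub_neg_eq_add, ← two_mul, one_mul, abs_of_pos (by positivity)]
  calc ‖fourierCoeff (fun x : UnitAddCircle ↦ (ballKernel h x : ℂ)) k‖
      = (2 * h)⁻¹ * ‖∫ x : ℝ in -h..h, fourier (-k) (x : UnitAddCircle)‖ := by
        rw [fourierCoeff_ballKernel hh hh2, norm_mul, Complex.norm_of_nonneg (by positivity)]
    _ ≤ (2 * h)⁻¹ * (2 * h) := by gcongr
    _ = 1 := inv_mul_cancel₀ (by positivity)

lemma norm_integral_fourier_neg_le (h : ℝ) {k : ℤ} (hk : k ≠ 0) :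
    ‖∫ x : ℝ in -h..h, fourier (-k) (x : UnitAddCircle)‖ ≤ 2 / (1 + |(k : ℝ)|) := by
  have one_le_abs_k : 1 ≤ |(k : ℝ)| := by exact_mod_cast Int.one_le_abs hk
  set c : ℂ := 2 * Real.pi * Complex.I * (-k : ℤ) with hc
  have norm_c : ‖c‖ = 2 * Real.pi * |(k : ℝ)| := by
    simp [hc, abs_of_pos Real.pi_pos]
  have c_ne_zero : c ≠ 0 := by
    rw [← norm_pos_iff, norm_c]
    positivity
  have norm_exp (x : ℝ) : ‖Complex.exp (c * x)‖ = 1 := by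
    simp [hc, Complex.norm_exp]
  simp only [fourier_coe_apply, Complex.ofReal_one, div_one, ← hc]
  rw [integral_exp_mul_complex c_ne_zero, norm_div, norm_c]
  refine div_le_div₀ zero_le_two ?_ (by positivity) ?_
  · refine (norm_sub_le _ _).trans_eq ?_
    rw [norm_exp, norm_exp, one_add_one_eq_two]
  · nlinarith [Real.pi_gt_three]

lemma norm_fourierCoeff_ballKernel_le_inv {h : ℝ} (hh : 0 < h) (hh2 : h ≤ 1 / 2) (k : ℤ) :
    ‖fourierCoeff (fun x : UnitAddCircle ↦ (ballKernel h x : ℂ)) k‖ ≤ (h * (1 + |(k : ℝ)|))⁻¹ := by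
  rcases eq_or_ne k 0 with rfl | hk
  · refine (norm_fourierCoeff_ballKernel_le_one hh hh2 0).trans ((one_le_inv₀ ?_).mpr ?_) <;>
      simp only [Int.cast_zero, abs_zero, add_zero, mul_one] <;> linarith
  · calc ‖fourierCoeff (fun x : UnitAddCircle ↦ (ballKernel h x : ℂ)) k‖
        = (2 * h)⁻¹ * ‖∫ x : ℝ in -h..h, fourier (-k) (x : UnitAddCircle)‖ := by
          rw [fourierCoeff_ballKernel hh hh2, norm_mul, Complex.norm_of_nonneg (by positivity)]
      _ ≤ (2 * h)⁻¹ * (2 / (1 + |(k : ℝ)|)) := by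
          gcongr
          exact norm_integral_fourier_neg_le h hk
      _ = (h * (1 + |(k : ℝ)|))⁻¹ := by field_simp

lemma ballKernel_eq_prod {ι : Type*} [Fintype ι] {h : ℝ} (hh : 0 ≤ h) (x : UnitAddTorus ι) :
    ballKernel h x = ∏ i, ballKernel h (x i) := by
  simp only [ballKernel, closedBall_pi _ hh, measureReal_def, volume_pi_pi, ENNReal.toReal_prod]
  classical
  simp only [Pi.zero_apply, Set.indicator_apply, Set.mem_univ_pi, prod_ite_zero,
    mem_univ, forall_const, prod_inv_distrib]

lemma ballMultiplier_eq_prod {ι : Type*} [Fintype ι] {h : ℝ} (hh : 0 ≤ h) (k : ι → ℤ) :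
    ballMultiplier h k =
      ∏ i, fourierCoeff (fun x : UnitAddCircle ↦ (ballKernel h x : ℂ)) (k i) := by
  simp only [ballMultiplier, realFourierCoeff, ballKernel_eq_prod hh, Complex.ofReal_prod]
  exact mFourierCoeff_prod_apply (fun _ x ↦ (ballKernel h x : ℂ)) k

end Multiplier

section FrequencyWeight

/-- The weight `∏ i, (1 + |k i|) ^ σ` on frequencies. It dominates `|k| ^ σ` and, unlike it,
factors over the coordinates, as the multiplier `ballMultiplier h` does. -/
noncomputable def freqWeight {ι : Type*} [Fintype ι] (σ : ℝ) (k : ι → ℤ) : ℝ :=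
  ∏ i, (1 + |(k i : ℝ)|) ^ σ

lemma freqWeight_nonneg {ι : Type*} [Fintype ι] (σ : ℝ) (k : ι → ℤ) : 0 ≤ freqWeight σ k :=
  prod_nonneg fun _ _ ↦ by positivity

lemma one_add_sum_le_prod_one_add {ι : Type*} (s : Finset ι) {f : ι → ℝ} (hf : ∀ i, 0 ≤ f i) :
    1 + ∑ i ∈ s, f i ≤ ∏ i ∈ s, (1 + f i) := by
  classical
  induction s using Finset.induction_on with
  | empty => simp
  | insert i s hi ih =>
    rw [sum_insert hi, prod_insert hi]
    nlinarith [mul_le_mul_of_nonneg_left ih (hf i), mul_nonneg (hf i) (s.sum_nonneg fun j _ ↦ hf j)]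

lemma intNorm_rpow_le_freqWeight {d : ℕ} {σ : ℝ} (hσ : 0 ≤ σ) (k : Fin d → ℤ) :
    intNorm k ^ σ ≤ freqWeight σ k := by
  rw [freqWeight, Real.finsetProd_rpow _ _ fun _ _ ↦ by positivity]
  refine Real.rpow_le_rpow (Real.sqrt_nonneg _) (Real.sqrt_le_iff.mpr ⟨by positivity, ?_⟩) hσ
  rw [← prod_pow]
  calc ∑ i, (k i : ℝ) ^ 2
      ≤ 1 + ∑ i, (k i : ℝ) ^ 2 := le_add_of_nonneg_left zero_le_one
    _ ≤ ∏ i, (1 + (k i : ℝ) ^ 2) := one_add_sum_le_prod_one_add _ fun i ↦ sq_nonneg _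
    _ ≤ ∏ i, (1 + |(k i : ℝ)|) ^ 2 := by
        gcongr with i
        nlinarith [abs_nonneg (k i : ℝ), sq_abs (k i : ℝ)]

lemma summable_one_add_abs_int_rpow {s : ℝ} (hs : s < -1) :
    Summable fun j : ℤ ↦ (1 + |(j : ℝ)|) ^ s := by
  refine (Real.summable_abs_int_rpow (b := -s) (by linarith)).of_norm_bounded_eventually ?_
  filter_upwards [(Set.finite_singleton (0 : ℤ)).compl_mem_cofinite] with j hj
  rw [neg_neg, Real.norm_of_nonneg (by positivity)]
  have abs_j_pos : 0 < |(j : ℝ)| := abs_pos.mpr (Int.cast_ne_zero.mpr hj)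
  exact Real.rpow_le_rpow_of_nonpos abs_j_pos (by linarith) (by linarith)

lemma sum_prod_le_tsum_pow {ι κ : Type*} [Fintype ι] {c : κ → ℝ} (hc : ∀ j, 0 ≤ c j)
    (hc' : Summable c) (s : Finset (ι → κ)) :
    ∑ k ∈ s, ∏ i, c (k i) ≤ (∑' j, c j) ^ Fintype.card ι := by
  classical
  calc ∑ k ∈ s, ∏ i, c (k i)
      ≤ ∑ k ∈ Fintype.piFinset fun i ↦ s.image (· i), ∏ i, c (k i) :=
        sum_le_sum_of_subset_of_nonneg
          (fun k hk ↦ Fintype.mem_piFinset.mpr fun i ↦ mem_image_of_mem (· i) hk)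
          fun k _ _ ↦ prod_nonneg fun i _ ↦ hc _
    _ = ∏ i, ∑ j ∈ s.image (· i), c j := (prod_univ_sum _ _).symm
    _ ≤ ∏ _i : ι, ∑' j, c j :=
        prod_le_prod (fun i _ ↦ sum_nonneg fun j _ ↦ hc j)
          fun i _ ↦ hc'.sum_le_tsum _ fun j _ ↦ hc j
    _ = (∑' j, c j) ^ Fintype.card ι := by rw [prod_const, card_univ]

lemma norm_fourierCoeff_ballKernel_sq_le {h τ : ℝ} (hh : 0 < h) (hh2 : h ≤ 1 / 2) (hτ : 0 ≤ τ)
    (hτ2 : τ ≤ 2) (k : ℤ) :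
    ‖fourierCoeff (fun x : UnitAddCircle ↦ (ballKernel h x : ℂ)) k‖ ^ 2 ≤
      h ^ (-τ) * (1 + |(k : ℝ)|) ^ (-τ) := by
  set c := ‖fourierCoeff (fun x : UnitAddCircle ↦ (ballKernel h x : ℂ)) k‖
  calc c ^ 2 ≤ c ^ τ := by
        rw [← Real.rpow_two]
        exact Real.rpow_le_rpow_of_exponent_ge' (norm_nonneg _)
          (norm_fourierCoeff_ballKernel_le_one hh hh2 k) hτ hτ2
    _ ≤ (h * (1 + |(k : ℝ)|))⁻¹ ^ τ :=
        Real.rpow_le_rpow (norm_nonneg _) (norm_fourierCoeff_ballKernel_le_inv hh hh2 k) hτ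
    _ = h ^ (-τ) * (1 + |(k : ℝ)|) ^ (-τ) := by
        rw [← Real.rpow_neg_eq_inv_rpow, Real.mul_rpow hh.le (by positivity)]

lemma sum_freqWeight_mul_norm_ballMultiplier_sq_le {ι : Type*} [Fintype ι] {h σ τ : ℝ}
    (hh : 0 < h) (hh2 : h ≤ 1 / 2) (hτ : 0 ≤ τ) (hτ2 : τ ≤ 2) (hστ : 2 * σ + 1 < τ)
    (s : Finset (ι → ℤ)) :
    ∑ k ∈ s, (freqWeight σ k * ‖ballMultiplier h k‖) ^ 2 ≤
      (h ^ (-τ) * ∑' j : ℤ, (1 + |(j : ℝ)|) ^ (2 * σ - τ)) ^ Fintype.card ι := by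
  have factor_le (j : ℤ) : ((1 + |(j : ℝ)|) ^ σ *
      ‖fourierCoeff (fun x : UnitAddCircle ↦ (ballKernel h x : ℂ)) j‖) ^ 2 ≤
        h ^ (-τ) * (1 + |(j : ℝ)|) ^ (2 * σ - τ) := by
    have pos : 0 < 1 + |(j : ℝ)| := by positivity
    have sq_rpow : ((1 + |(j : ℝ)|) ^ σ) ^ 2 = (1 + |(j : ℝ)|) ^ (2 * σ) := by
      rw [mul_comm, Real.rpow_mul pos.le, Real.rpow_two]
    rw [mul_pow, sq_rpow, sub_eq_add_neg, Real.rpow_add pos, mul_left_comm]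
    gcongr
    exact norm_fourierCoeff_ballKernel_sq_le hh hh2 hτ hτ2 j
  rw [← tsum_mul_left]
  refine le_trans (sum_le_sum fun k _ ↦ ?_) (sum_prod_le_tsum_pow (fun j ↦ by positivity)
    ((summable_one_add_abs_int_rpow (by linarith)).mul_left _) s)
  rw [ballMultiplier_eq_prod hh.le, norm_prod, freqWeight, ← prod_mul_distrib, ← prod_pow]
  exact prod_le_prod (fun i _ ↦ sq_nonneg _) fun i _ ↦ factor_le (k i)

end FrequencyWeight

section BoundaryLayer

variable {X : Type*} [PseudoMetricSpace X] {A : Set X}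

/-- The points at distance less than `r` from both a set and its complement. Averaging the indicator
function of the set at a scale below `r` does not change it outside this layer. -/
def boundaryLayer (r : ℝ) (A : Set X) : Set X :=
  Metric.thickening r A ∩ Metric.thickening r Aᶜ

lemma measurableSet_boundaryLayer [MeasurableSpace X] [OpensMeasurableSpace X] (r : ℝ)
    (A : Set X) : MeasurableSet (boundaryLayer r A) :=
  (Metric.isOpen_thickening.inter Metric.isOpen_thickening).measurableSet

lemma boundaryLayer_compl (r : ℝ) (A : Set X) : boundaryLayer r Aᶜ = boundaryLayer r A := by
  rw [boundaryLayer, boundaryLayer, compl_compl, Set.inter_comm]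

lemma mem_iff_mem_of_notMem_boundaryLayer {r : ℝ} {x y : X} (hx : x ∉ boundaryLayer r A)
    (hxy : dist x y < r) : y ∈ A ↔ x ∈ A := by
  have mem_thickening {B : Set X} (hB : x ∈ B ∨ y ∈ B) : x ∈ Metric.thickening r B := by
    rcases hB with hB | hB
    · exact Metric.self_subset_thickening (dist_nonneg.trans_lt hxy) B hB
    · exact Metric.mem_thickening_iff.mpr ⟨y, hB, hxy⟩
  by_contra hne
  refine hx ⟨mem_thickening ?_, mem_thickening (B := Aᶜ) ?_⟩
  · tauto
  · rw [Set.mem_compl_iff, Set.mem_compl_iff]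
    tauto

lemma boundaryLayer_thickening_subset (r : ℝ) {s : ℝ} (hs : 0 < s) (A : Set X) :
    boundaryLayer r (Metric.thickening s A) ⊆ boundaryLayer (r + s) A :=
  Set.inter_subset_inter (Metric.thickening_thickening_subset r s A) <|
    (Metric.thickening_subset_of_subset r
      (Set.compl_subset_compl.mpr (Metric.self_subset_thickening hs A))).trans
      (Metric.thickening_mono (le_add_of_nonneg_right hs.le) _)

lemma thickening_subset_union_boundaryLayer {r : ℝ} (hr : 0 < r) (A : Set X) :
    Metric.thickening r A ⊆ A ∪ boundaryLayer r A := fun x hx ↦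
  (em (x ∈ A)).imp_right fun hxA ↦ ⟨hx, Metric.self_subset_thickening hr Aᶜ hxA⟩

lemma indicator_one_mem_Icc {α : Type*} (A : Set α) (x : α) :
    A.indicator (1 : α → ℝ) x ∈ Set.Icc 0 1 := by
  by_cases hx : x ∈ A <;> simp [hx]

lemma sum_sq_realFourierCoeff_indicator_mul_ballMultiplier_sub_le {ι : Type*} [Fintype ι]
    {A : Set (UnitAddTorus ι)} (hA : MeasurableSet A) {h : ℝ} (hh : 0 < h)
    (s : Finset (ι → ℤ)) :
    ∑ k ∈ s, (‖realFourierCoeff (A.indicator 1) k‖ *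
      ‖ballMultiplier h k - ballMultiplier (2 * h) k‖) ^ 2 ≤
        volume.real (boundaryLayer (3 * h) A) := by
  refine sum_sq_realFourierCoeff_mul_ballMultiplier_sub_le (r := 2 * h)
    ((integrable_const 1).indicator hA) (indicator_one_mem_Icc A)
    (measurableSet_boundaryLayer _ _) hh (by linarith) (by positivity) le_rfl
    (fun x hx y hxy ↦ ?_) s
  have mem_iff : y ∈ A ↔ x ∈ A :=
    mem_iff_mem_of_notMem_boundaryLayer hx (by rw [dist_eq_norm]; linarith)
  by_cases hxA : x ∈ A <;> simp [hxA, mem_iff]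

end BoundaryLayer

section DyadicSum

lemma norm_sq_le_norm_sq_add {E : Type*} [SeminormedAddCommGroup E] (x y : E) :
    ‖x‖ ^ 2 ≤ ‖y‖ ^ 2 + ‖x - y‖ * (‖x‖ + ‖y‖) := by
  nlinarith [norm_sub_norm_le x y, norm_nonneg x, norm_nonneg y]

lemma sum_mul_norm_sq_mul_le {κ E : Type*} [SeminormedAddCommGroup E] (s : Finset κ)
    {c w : κ → ℝ} (hc : ∀ k, 0 ≤ c k) (hw : ∀ k, 0 ≤ w k) (m m' : κ → E) :
    ∑ k ∈ s, c k * ‖m k‖ ^ 2 * w k ≤ ∑ k ∈ s, c k * ‖m' k‖ ^ 2 * w k +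
      √(∑ k ∈ s, (c k * ‖m k - m' k‖) ^ 2) *
        (√(∑ k ∈ s, (w k * ‖m k‖) ^ 2) + √(∑ k ∈ s, (w k * ‖m' k‖) ^ 2)) := by
  calc ∑ k ∈ s, c k * ‖m k‖ ^ 2 * w k
      ≤ ∑ k ∈ s, c k * (‖m' k‖ ^ 2 + ‖m k - m' k‖ * (‖m k‖ + ‖m' k‖)) * w k := by
        gcongr with k
        exacts [hw k, hc k, norm_sq_le_norm_sq_add _ _]
    _ = ∑ k ∈ s, c k * ‖m' k‖ ^ 2 * w k +
          (∑ k ∈ s, c k * ‖m k - m' k‖ * (w k * ‖m k‖) +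
            ∑ k ∈ s, c k * ‖m k - m' k‖ * (w k * ‖m' k‖)) := by
        simp only [← sum_add_distrib]
        exact sum_congr rfl fun k _ ↦ by ring
    _ ≤ _ := by
        rw [mul_add]
        gcongr <;> exact Real.sum_mul_le_sqrt_mul_sqrt s _ _

lemma le_mul_pow_of_forall_succ_le_add {u : ℕ → ℝ} {E ρ : ℝ} (hρ : 1 < ρ) (hu : 0 ≤ u 0)
    (hE : 0 ≤ E) {j : ℕ} (hstep : ∀ i < j, u (i + 1) ≤ u i + E * ρ ^ (i + 1)) :
    u j ≤ (u 0 + E * ρ / (ρ - 1)) * ρ ^ j := by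
  have sub_pos : 0 < ρ - 1 := sub_pos.mpr hρ
  induction j with
  | zero => rw [pow_zero, mul_one]; exact le_add_of_nonneg_right (by positivity)
  | succ j ih =>
    set K := u 0 + E * ρ / (ρ - 1)
    have add_le_mul : K + E * ρ ≤ K * ρ := by
      have : E * ρ / (ρ - 1) * (ρ - 1) = E * ρ := div_mul_cancel₀ _ sub_pos.ne'
      nlinarith
    calc u (j + 1) ≤ u j + E * ρ ^ (j + 1) := hstep j j.lt_succ_self
      _ ≤ K * ρ ^ j + E * ρ ^ (j + 1) := by
          gcongr
          exact ih fun i hi ↦ hstep i (hi.trans j.lt_succ_self)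
      _ = (K + E * ρ) * ρ ^ j := by ring
      _ ≤ K * ρ * ρ ^ j := by gcongr
      _ = K * ρ ^ (j + 1) := by ring

variable {ι : Type*} [Fintype ι]

/-- The absolute Fourier coefficients of `smoothing h 1_A`, summed over the frequencies in `s` with
the weight `freqWeight σ` that bounds the squared exponential sums. -/
noncomputable def weightedFourierSum (σ h : ℝ) (A : Set (UnitAddTorus ι)) (s : Finset (ι → ℤ)) :
    ℝ :=
  ∑ k ∈ s, ‖realFourierCoeff (A.indicator 1) k‖ * ‖ballMultiplier h k‖ ^ 2 * freqWeight σ k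

lemma weightedFourierSum_le_add {A : Set (UnitAddTorus ι)} (hA : MeasurableSet A) {h σ τ V : ℝ}
    (hh : 0 < h) (hh4 : h ≤ 1 / 4) (hτ : 0 ≤ τ) (hτ2 : τ ≤ 2) (hστ : 2 * σ + 1 < τ)
    (hV : volume.real (boundaryLayer (3 * h) A) ≤ V) (s : Finset (ι → ℤ)) :
    weightedFourierSum σ h A s ≤ weightedFourierSum σ (2 * h) A s +
      2 * √(V * (h ^ (-τ) * ∑' j : ℤ, (1 + |(j : ℝ)|) ^ (2 * σ - τ)) ^ Fintype.card ι) := by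
  set Z := ∑' j : ℤ, (1 + |(j : ℝ)|) ^ (2 * σ - τ)
  have : 0 ≤ Z := tsum_nonneg fun j ↦ by positivity
  have rpow_le : (2 * h) ^ (-τ) ≤ h ^ (-τ) :=
    Real.rpow_le_rpow_of_nonpos hh (by linarith) (by linarith)
  calc weightedFourierSum σ h A s
      ≤ weightedFourierSum σ (2 * h) A s +
          √(∑ k ∈ s, (‖realFourierCoeff (A.indicator 1) k‖ *
            ‖ballMultiplier h k - ballMultiplier (2 * h) k‖) ^ 2) *
          (√(∑ k ∈ s, (freqWeight σ k * ‖ballMultiplier h k‖) ^ 2) +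
            √(∑ k ∈ s, (freqWeight σ k * ‖ballMultiplier (2 * h) k‖) ^ 2)) :=
        sum_mul_norm_sq_mul_le s (fun _ ↦ norm_nonneg _) (freqWeight_nonneg σ) _ _
    _ ≤ weightedFourierSum σ (2 * h) A s +
          √V * (√((h ^ (-τ) * Z) ^ Fintype.card ι) + √((h ^ (-τ) * Z) ^ Fintype.card ι)) := by
        gcongr
        · exact (sum_sq_realFourierCoeff_indicator_mul_ballMultiplier_sub_le hA hh s).trans hV
        · exact sum_freqWeight_mul_norm_ballMultiplier_sq_le hh (by linarith) hτ hτ2 hστ s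
        · refine (sum_freqWeight_mul_norm_ballMultiplier_sq_le (by positivity) (by linarith)
            hτ hτ2 hστ s).trans ?_
          gcongr
    _ = _ := by
        rw [Real.sqrt_mul (measureReal_nonneg.trans hV)]
        ring

lemma one_le_freqWeight {σ : ℝ} (hσ : 0 ≤ σ) (k : ι → ℤ) : 1 ≤ freqWeight σ k :=
  Finset.one_le_prod fun _ _ ↦ Real.one_le_rpow (le_add_of_nonneg_right (abs_nonneg _)) hσ

lemma weightedFourierSum_half_le (A : Set (UnitAddTorus ι)) {σ τ : ℝ} (hσ : 0 ≤ σ) (hτ2 : τ ≤ 2)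
    (hστ : 2 * σ + 1 < τ) (s : Finset (ι → ℤ)) :
    weightedFourierSum σ (1 / 2) A s ≤
      ((1 / 2) ^ (-τ) * ∑' j : ℤ, (1 + |(j : ℝ)|) ^ (2 * σ - τ)) ^ Fintype.card ι := by
  refine le_trans (sum_le_sum fun k _ ↦ ?_) (sum_freqWeight_mul_norm_ballMultiplier_sq_le
    one_half_pos le_rfl (by linarith) hτ2 hστ s)
  have norm_coeff_le_one : ‖realFourierCoeff (A.indicator 1) k‖ ≤ 1 := by
    refine (norm_realFourierCoeff_le _ k).trans ?_
    refine (integral_mono_of_nonneg (ae_of_all _ fun _ ↦ abs_nonneg _) (integrable_const 1)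
      (ae_of_all _ fun x ↦ ?_)).trans_eq (by simp)
    exact (abs_of_nonneg (indicator_one_mem_Icc A x).1).trans_le (indicator_one_mem_Icc A x).2
  calc ‖realFourierCoeff (A.indicator 1) k‖ * ‖ballMultiplier (1 / 2) k‖ ^ 2 * freqWeight σ k
      ≤ 1 * ‖ballMultiplier (1 / 2) k‖ ^ 2 * freqWeight σ k ^ 2 := by
        gcongr
        · exact freqWeight_nonneg σ k
        · exact le_self_pow₀ (one_le_freqWeight hσ k) two_ne_zero
    _ = (freqWeight σ k * ‖ballMultiplier (1 / 2) k‖) ^ 2 := by ring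

lemma half_pow_mul_rpow_neg_pow (τ : ℝ) (m n : ℕ) :
    (1 / 2 : ℝ) ^ m * (((1 / 2 : ℝ) ^ m) ^ (-τ)) ^ n = (((2 : ℝ) ^ ((n * τ - 1) / 2)) ^ m) ^ 2 := by
  have half_pow : (1 / 2 : ℝ) ^ m = 2 ^ (-m : ℝ) := by
    rw [Real.rpow_neg zero_le_two, Real.rpow_natCast, one_div, inv_pow]
  rw [half_pow]
  simp only [← Real.rpow_mul_natCast zero_le_two, ← Real.rpow_mul zero_le_two,
    ← Real.rpow_add zero_lt_two]
  push_cast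
  ring_nf

lemma weightedFourierSum_half_pow_succ_le {A : Set (UnitAddTorus ι)} (hA : MeasurableSet A)
    {C σ τ : ℝ} (hτ : 0 ≤ τ) (hτ2 : τ ≤ 2) (hστ : 2 * σ + 1 < τ) {i : ℕ}
    (hC : volume.real (boundaryLayer (3 * (1 / 2) ^ (i + 2)) A) ≤ C * (3 * (1 / 2) ^ (i + 2)))
    (s : Finset (ι → ℤ)) :
    weightedFourierSum σ ((1 / 2) ^ (i + 2)) A s ≤ weightedFourierSum σ ((1 / 2) ^ (i + 1)) A s +
      2 * √(3 * C * (∑' j : ℤ, (1 + |(j : ℝ)|) ^ (2 * σ - τ)) ^ Fintype.card ι) *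
        ((2 : ℝ) ^ ((Fintype.card ι * τ - 1) / 2)) ^ (i + 2) := by
  set Z := ∑' j : ℤ, (1 + |(j : ℝ)|) ^ (2 * σ - τ)
  set ρ : ℝ := 2 ^ ((Fintype.card ι * τ - 1) / 2)
  have le_quarter : (1 / 2 : ℝ) ^ (i + 2) ≤ 1 / 4 :=
    (pow_le_pow_of_le_one (by norm_num) (by norm_num) (Nat.le_add_left 2 i)).trans_eq
      (by norm_num)
  have const_eq : C * (3 * (1 / 2) ^ (i + 2)) *
      (((1 / 2 : ℝ) ^ (i + 2)) ^ (-τ) * Z) ^ Fintype.card ι =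
        3 * C * Z ^ Fintype.card ι * (ρ ^ (i + 2)) ^ 2 := by
    rw [← half_pow_mul_rpow_neg_pow]
    ring
  have two_mul_eq : 2 * (1 / 2 : ℝ) ^ (i + 2) = (1 / 2) ^ (i + 1) := by ring
  have key := weightedFourierSum_le_add hA (by positivity) le_quarter hτ hτ2 hστ hC s
  rwa [const_eq, Real.sqrt_mul' _ (sq_nonneg _), Real.sqrt_sq (by positivity), ← mul_assoc,
    two_mul_eq] at key

lemma exists_weightedFourierSum_le [Nonempty ι] (C : ℝ) {σ τ : ℝ} (hσ : 0 ≤ σ) (hτ2 : τ ≤ 2)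
    (hστ : 2 * σ + 1 < τ) : ∃ K, 0 ≤ K ∧ ∀ A : Set (UnitAddTorus ι), MeasurableSet A → ∀ j : ℕ,
      (∀ r ≥ (1 / 2) ^ (j + 1), volume.real (boundaryLayer r A) ≤ C * r) → ∀ s,
        weightedFourierSum σ ((1 / 2) ^ (j + 1)) A s ≤
          K * ((2 : ℝ) ^ ((Fintype.card ι * τ - 1) / 2)) ^ j := by
  set n := Fintype.card ι
  set ρ : ℝ := 2 ^ ((n * τ - 1) / 2)
  set Z := ∑' j : ℤ, (1 + |(j : ℝ)|) ^ (2 * σ - τ)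
  set E := 2 * √(3 * C * Z ^ n) * ρ
  have one_lt_rho : 1 < ρ := by
    have : (1 : ℝ) ≤ n := Nat.one_le_cast.mpr Fintype.card_pos
    exact Real.one_lt_rpow one_lt_two (by nlinarith)
  have : 0 ≤ Z := tsum_nonneg fun j ↦ by positivity
  have : 0 < ρ - 1 := sub_pos.mpr one_lt_rho
  refine ⟨((1 / 2) ^ (-τ) * Z) ^ n + E * ρ / (ρ - 1), by positivity, fun A hA j hC s ↦ ?_⟩
  have succ_le_add : ∀ i < j, weightedFourierSum σ ((1 / 2) ^ (i + 2)) A s ≤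
      weightedFourierSum σ ((1 / 2) ^ (i + 1)) A s + E * ρ ^ (i + 1) := by
    intro i hi
    have pow_le : (1 / 2 : ℝ) ^ (j + 1) ≤ (1 / 2) ^ (i + 2) :=
      pow_le_pow_of_le_one (by norm_num) (by norm_num) (by omega)
    have hh : (0 : ℝ) < (1 / 2) ^ (i + 2) := by positivity
    refine (weightedFourierSum_half_pow_succ_le hA (by linarith) hτ2 hστ
      (hC _ (by linarith)) s).trans_eq ?_
    ring
  calc weightedFourierSum σ ((1 / 2) ^ (j + 1)) A s
      ≤ (weightedFourierSum σ ((1 / 2) ^ (0 + 1)) A s + E * ρ / (ρ - 1)) * ρ ^ j :=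
        le_mul_pow_of_forall_succ_le_add
          (u := fun i ↦ weightedFourierSum σ ((1 / 2) ^ (i + 1)) A s)
          one_lt_rho (sum_nonneg fun k _ ↦ mul_nonneg (by positivity) (freqWeight_nonneg σ k))
          (by positivity) succ_le_add
    _ ≤ _ := by
        rw [zero_add, pow_one]
        gcongr
        exact weightedFourierSum_half_le A hσ hτ2 hστ s

end DyadicSum

section PairCount

variable {ι : Type*} [Fintype ι]

lemma hasSum_smoothing {h : ℝ} (hh : 0 < h) {A : Set (UnitAddTorus ι)} (hA : MeasurableSet A)
    (x : UnitAddTorus ι) :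
    HasSum (fun k ↦ realFourierCoeff (A.indicator 1) k * ballMultiplier h k ^ 2 * mFourier k x)
      (smoothing h (A.indicator 1) x : ℂ) := by
  have indicator_integrable : Integrable (A.indicator (1 : UnitAddTorus ι → ℝ)) :=
    (integrable_const 1).indicator hA
  have memLp_ballAverage : MemLp (ballAverage h (A.indicator 1)) 2 :=
    memLp_of_bounded
      (ae_of_all _ (ballAverage_mem_Icc hh indicator_integrable (indicator_one_mem_Icc A)))
      (integrable_ballAverage h indicator_integrable).1 2
  have coeff_eq (k : ι → ℤ) : realFourierCoeff (A.indicator 1) k * ballMultiplier h k ^ 2 =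
      realFourierCoeff (ballKernel h) k * realFourierCoeff (ballAverage h (A.indicator 1)) k := by
    rw [realFourierCoeff_ballAverage h indicator_integrable, ← ballMultiplier]
    ring
  simp only [coeff_eq]
  exact hasSum_realFourierCoeff_convolution (memLp_ballKernel h 2) memLp_ballAverage x

lemma indicator_le_smoothing_indicator_thickening {h : ℝ} (hh : 0 < h) (A : Set (UnitAddTorus ι))
    (x : UnitAddTorus ι) :
    A.indicator 1 x ≤ smoothing h ((Metric.thickening (3 * h) A).indicator 1) x := by
  set f : UnitAddTorus ι → ℝ := (Metric.thickening (3 * h) A).indicator 1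
  have hf : Integrable f :=
    (integrable_const 1).indicator Metric.isOpen_thickening.measurableSet
  by_cases hx : x ∈ A
  · rw [Set.indicator_of_mem hx, Pi.one_apply]
    refine (ballAverage_eq_of_forall_norm_le hh (integrable_ballAverage h hf) fun y hy ↦
      ballAverage_eq_of_forall_norm_le hh hf fun z hz ↦ ?_).ge
    refine Set.indicator_of_mem (Metric.mem_thickening_iff.mpr ⟨x, hx, ?_⟩) _
    rw [← dist_eq_norm] at hy hz
    linarith [dist_triangle_left z x y, dist_comm x y]
  · rw [Set.indicator_of_notMem hx]
    exact ballAverage_mem hh (integrable_ballAverage h hf) (convex_Ici 0) isClosed_Ici fun y _ ↦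
      ballAverage_mem hh hf (convex_Ici 0) isClosed_Ici fun z _ ↦
        (indicator_one_mem_Icc _ z).1

variable {α : Type*}

/-- The exponential sum at frequency `k` of the points `v n`, `n ∈ t`, of the torus. The index set
is an arbitrary `Finset`, and the sum is not divided by its cardinality. -/
noncomputable def expSum (t : Finset α) (v : α → UnitAddTorus ι) (k : ι → ℤ) : ℂ :=
  ∑ n ∈ t, mFourier k (v n)

lemma sum_mFourier_sub (t : Finset α) (v : α → UnitAddTorus ι) (k : ι → ℤ) :
    ∑ p ∈ t ×ˢ t, mFourier k (v p.1 - v p.2) = (‖expSum t v k‖ : ℂ) ^ 2 := by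
  rw [← Complex.mul_conj', expSum, map_sum, sum_mul_sum, sum_product]
  simp only [sub_eq_add_neg, mFourier_apply_add, mFourier_apply_neg]

lemma expSum_zero (t : Finset α) (v : α → UnitAddTorus ι) : expSum t v 0 = #t := by
  simp [expSum, mFourier_zero]

lemma norm_sub_le_of_hasSum {κ E : Type*} [SeminormedAddCommGroup E] {f : κ → E} {a : E}
    (hf : HasSum f a) (i : κ) {B : ℝ} (hB : ∀ s : Finset κ, i ∉ s → ∑ k ∈ s, ‖f k‖ ≤ B) :
    ‖a - f i‖ ≤ B := by
  classical
  refine le_of_tendsto (Filter.Tendsto.sub_const hf (f i)).norm ?_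
  filter_upwards [Filter.eventually_ge_atTop {i}] with s hs
  rw [← sum_erase_eq_sub (singleton_subset_iff.mp hs)]
  exact (norm_sum_le _ _).trans (hB _ (notMem_erase i s))

lemma abs_sum_smoothing_sub_le {A : Set (UnitAddTorus ι)} (hA : MeasurableSet A) {h σ B Q : ℝ}
    (hh : 0 < h) (hB : ∀ s, weightedFourierSum σ h A s ≤ B) (hQ : 0 ≤ Q) {t : Finset α}
    {v : α → UnitAddTorus ι} (hv : ∀ k ≠ 0, ‖expSum t v k‖ ^ 2 ≤ Q * freqWeight σ k) :
    |∑ p ∈ t ×ˢ t, smoothing h (A.indicator 1) (v p.1 - v p.2) - (#t : ℝ) ^ 2 * volume.real A| ≤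
      Q * B := by
  have hasSum_pairs := hasSum_sum fun p (_ : p ∈ t ×ˢ t) ↦ hasSum_smoothing hh hA (v p.1 - v p.2)
  simp only [← mul_sum, sum_mFourier_sub] at hasSum_pairs
  have key := norm_sub_le_of_hasSum hasSum_pairs 0 (B := Q * B) fun s hs ↦ ?_
  · rw [ballMultiplier_zero hh, realFourierCoeff_zero, integral_indicator_one hA,
      expSum_zero] at key
    rw [← Real.norm_eq_abs, ← Complex.norm_real]
    push_cast
    simpa [mul_comm] using key
  refine le_trans ?_ (mul_le_mul_of_nonneg_left (hB s) hQ)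
  rw [weightedFourierSum, mul_sum]
  refine sum_le_sum fun k hk ↦ ?_
  rw [norm_mul, norm_mul, norm_pow, norm_pow, Complex.norm_real, norm_norm]
  refine (mul_le_mul_of_nonneg_left (hv k fun hk0 ↦ hs (hk0 ▸ hk)) (by positivity)).trans_eq ?_
  ring

lemma sum_indicator_sub_le {A : Set (UnitAddTorus ι)} {h σ B Q : ℝ} (hh : 0 < h)
    (hB : ∀ s, weightedFourierSum σ h (Metric.thickening (3 * h) A) s ≤ B) (hQ : 0 ≤ Q)
    {t : Finset α} {v : α → UnitAddTorus ι}
    (hv : ∀ k ≠ 0, ‖expSum t v k‖ ^ 2 ≤ Q * freqWeight σ k) :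
    ∑ p ∈ t ×ˢ t, A.indicator 1 (v p.1 - v p.2) ≤
      (#t : ℝ) ^ 2 * (volume.real A + volume.real (boundaryLayer (3 * h) A)) + Q * B := by
  have volume_thickening_le : volume.real (Metric.thickening (3 * h) A) ≤
      volume.real A + volume.real (boundaryLayer (3 * h) A) :=
    (measureReal_mono (thickening_subset_union_boundaryLayer (by positivity) A)).trans
      (measureReal_union_le _ _)
  calc ∑ p ∈ t ×ˢ t, A.indicator 1 (v p.1 - v p.2)
      ≤ ∑ p ∈ t ×ˢ t,
          smoothing h ((Metric.thickening (3 * h) A).indicator 1) (v p.1 - v p.2) :=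
        sum_le_sum fun p _ ↦ indicator_le_smoothing_indicator_thickening hh A _
    _ ≤ (#t : ℝ) ^ 2 * volume.real (Metric.thickening (3 * h) A) + Q * B := by
        rw [← sub_le_iff_le_add']
        exact (le_abs_self _).trans (abs_sum_smoothing_sub_le
          Metric.isOpen_thickening.measurableSet hh hB hQ hv)
    _ ≤ _ := by gcongr

lemma abs_sum_indicator_sub_le {A : Set (UnitAddTorus ι)} (hA : MeasurableSet A) {h σ B Q : ℝ}
    (hh : 0 < h) (hB : ∀ s, weightedFourierSum σ h (Metric.thickening (3 * h) A) s ≤ B)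
    (hB' : ∀ s, weightedFourierSum σ h (Metric.thickening (3 * h) Aᶜ) s ≤ B) (hQ : 0 ≤ Q)
    {t : Finset α} {v : α → UnitAddTorus ι}
    (hv : ∀ k ≠ 0, ‖expSum t v k‖ ^ 2 ≤ Q * freqWeight σ k) :
    |∑ p ∈ t ×ˢ t, A.indicator 1 (v p.1 - v p.2) - (#t : ℝ) ^ 2 * volume.real A| ≤
      (#t : ℝ) ^ 2 * volume.real (boundaryLayer (3 * h) A) + Q * B := by
  have sum_add_sum_compl : ∑ p ∈ t ×ˢ t, A.indicator (1 : UnitAddTorus ι → ℝ) (v p.1 - v p.2) +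
      ∑ p ∈ t ×ˢ t, Aᶜ.indicator 1 (v p.1 - v p.2) = (#t : ℝ) ^ 2 := by
    rw [← sum_add_distrib]
    simp [Set.indicator_self_add_compl_apply, sq]
  have sum_le := sum_indicator_sub_le hh hB hQ hv
  have sum_compl_le := sum_indicator_sub_le hh hB' hQ hv
  rw [boundaryLayer_compl, probReal_compl_eq_one_sub hA] at sum_compl_le
  exact abs_le.mpr ⟨by linarith, by linarith⟩

lemma volume_real_boundaryLayer_thickening_le {A : Set (UnitAddTorus ι)} {C : ℝ}
    (hC : ∀ r > 0, volume.real (boundaryLayer r A) ≤ C * r) {h r : ℝ} (hh : 0 < h) (hr : h ≤ r) :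
    volume.real (boundaryLayer r (Metric.thickening (3 * h) A)) ≤ 4 * C * r := by
  have C_nonneg : 0 ≤ C := by simpa using measureReal_nonneg.trans (hC 1 one_pos)
  calc volume.real (boundaryLayer r (Metric.thickening (3 * h) A))
      ≤ volume.real (boundaryLayer (r + 3 * h) A) :=
        measureReal_mono (boundaryLayer_thickening_subset r (by positivity) A)
    _ ≤ C * (r + 3 * h) := hC _ (by linarith)
    _ ≤ 4 * C * r := by nlinarith

open scoped Classical in
/-- An Erdős–Turán type inequality for differences. The first error term is the volume lost by
thickening at scale `2 ^ (-(j + 1))`, the second the contribution of the nonzero frequencies. -/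
theorem exists_abs_card_filter_mem_sub_le_of_norm_expSum_sq_le [Nonempty ι] (C : ℝ)
    {σ τ : ℝ} (hσ : 0 ≤ σ) (hτ2 : τ ≤ 2) (hστ : 2 * σ + 1 < τ) :
    ∃ K, 0 ≤ K ∧ ∀ A : Set (UnitAddTorus ι), MeasurableSet A →
      (∀ r > 0, volume.real (boundaryLayer r A) ≤ C * r) →
      ∀ (t : Finset α) (v : α → UnitAddTorus ι) (Q : ℝ), 0 ≤ Q →
      (∀ k ≠ 0, ‖expSum t v k‖ ^ 2 ≤ Q * freqWeight σ k) → ∀ j : ℕ,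
      |(#{p ∈ t ×ˢ t | v p.1 - v p.2 ∈ A} : ℝ) - (#t : ℝ) ^ 2 * volume.real A| ≤
        3 * C * (#t : ℝ) ^ 2 * (1 / 2) ^ (j + 1) +
          K * Q * ((2 : ℝ) ^ ((Fintype.card ι * τ - 1) / 2)) ^ j := by
  obtain ⟨K, K_nonneg, hK⟩ := exists_weightedFourierSum_le (ι := ι) (4 * C) hσ hτ2 hστ
  refine ⟨K, K_nonneg, fun A hA hC t v Q hQ hv j ↦ ?_⟩
  have hh : (0 : ℝ) < (1 / 2) ^ (j + 1) := by positivity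
  have card_eq : (#{p ∈ t ×ˢ t | v p.1 - v p.2 ∈ A} : ℝ) =
      ∑ p ∈ t ×ˢ t, A.indicator 1 (v p.1 - v p.2) := by
    simp [Set.indicator_apply]
  have bound {A : Set (UnitAddTorus ι)} (hC : ∀ r > 0, volume.real (boundaryLayer r A) ≤ C * r) :=
    hK _ Metric.isOpen_thickening.measurableSet j fun r hr ↦
      volume_real_boundaryLayer_thickening_le hC hh hr
  rw [card_eq]
  refine (abs_sum_indicator_sub_le hA hh (bound hC)
    (bound (by simpa only [boundaryLayer_compl] using hC)) hQ hv).trans ?_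
  have := mul_le_mul_of_nonneg_left (hC _ (by positivity : 0 < 3 * (1 / 2 : ℝ) ^ (j + 1)))
    (sq_nonneg (#t : ℝ))
  linarith

end PairCount

section Annulus

variable {d : ℕ}

/-- The annulus `A_{[a,b]} = {x : a ≤ ‖x‖ ≤ b}` of the torus. -/
def torusAnnulus (a b : ℝ) : Set (Fin d → AddCircle (1 : ℝ)) :=
  {x | a ≤ torusNorm x ∧ torusNorm x ≤ b}

lemma torusNorm_eq_norm_toLp (x : Fin d → AddCircle (1 : ℝ)) :
    torusNorm x = ‖WithLp.toLp 2 x‖ :=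
  (PiLp.norm_eq_of_L2 _).symm

lemma torusNorm_le_sqrt_mul_norm (x : Fin d → AddCircle (1 : ℝ)) :
    torusNorm x ≤ √d * ‖x‖ := by
  have sum_le : ∑ i, ‖x i‖ ^ 2 ≤ d * ‖x‖ ^ 2 := by
    calc ∑ i, ‖x i‖ ^ 2 ≤ ∑ _i : Fin d, ‖x‖ ^ 2 := by
          gcongr with i
          exact norm_le_pi_norm x i
      _ = d * ‖x‖ ^ 2 := by simp
  refine (Real.sqrt_le_sqrt sum_le).trans_eq ?_
  rw [Real.sqrt_mul (Nat.cast_nonneg d), Real.sqrt_sq (norm_nonneg x)]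

lemma abs_torusNorm_sub_torusNorm_le (x y : Fin d → AddCircle (1 : ℝ)) :
    |torusNorm x - torusNorm y| ≤ √d * dist x y := by
  calc |torusNorm x - torusNorm y| ≤ torusNorm (x - y) := by
        simp only [torusNorm_eq_norm_toLp, WithLp.toLp_sub]
        exact abs_norm_sub_norm_le _ _
    _ ≤ √d * dist x y := dist_eq_norm x y ▸ torusNorm_le_sqrt_mul_norm (x - y)

lemma torusNorm_le_sqrt (x : Fin d → AddCircle (1 : ℝ)) : torusNorm x ≤ √d := by
  have norm_le_one : ‖x‖ ≤ 1 := (pi_norm_le_iff_of_nonneg zero_le_one).mpr fun i ↦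
    (norm_le_half_period 1 one_ne_zero).trans (by norm_num)
  exact (torusNorm_le_sqrt_mul_norm x).trans
    (mul_le_of_le_one_right (Real.sqrt_nonneg _) norm_le_one)

lemma torusNorm_coe {y : Fin d → ℝ} (hy : ∀ i, |y i| ≤ 1 / 2) :
    torusNorm (fun i ↦ (y i : AddCircle (1 : ℝ))) = ‖WithLp.toLp 2 y‖ := by
  have norm_coe (i : Fin d) : ‖(y i : AddCircle (1 : ℝ))‖ = |y i| :=
    (norm_coe_eq_abs_iff 1 one_ne_zero).mpr (by rw [abs_one]; exact hy i)
  simp only [torusNorm, EuclideanSpace.norm_eq, norm_coe, Real.norm_eq_abs]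

lemma measurableSet_torusAnnulus (a b : ℝ) :
    MeasurableSet (torusAnnulus a b : Set (Fin d → AddCircle (1 : ℝ))) := by
  have continuous_torusNorm : Continuous (torusNorm : (Fin d → AddCircle (1 : ℝ)) → ℝ) := by
    unfold torusNorm
    fun_prop
  exact ((isClosed_le continuous_const continuous_torusNorm).inter
    (isClosed_le continuous_torusNorm continuous_const)).measurableSet

lemma addHaar_real_closedBall_sdiff_ball_le {E : Type*} [NormedAddCommGroup E] [NormedSpace ℝ E]
    [MeasurableSpace E] [BorelSpace E] [FiniteDimensional ℝ E] [Nontrivial E] (μ : Measure E)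
    [μ.IsAddHaarMeasure] (x : E) {a b : ℝ} (ha : 0 ≤ a) (hab : a ≤ b) :
    μ.real (Metric.closedBall x b \ Metric.ball x a) ≤
      μ.real (Metric.ball 0 1) * Module.finrank ℝ E * b ^ (Module.finrank ℝ E - 1) * (b - a) := by
  set n := Module.finrank ℝ E
  have pow_sub_le : b ^ n - a ^ n ≤ (b - a) * n * b ^ (n - 1) := by
    have := (le_abs_self _).trans (abs_pow_sub_pow_le b a n)
    rwa [abs_of_nonneg (sub_nonneg.mpr hab), abs_of_nonneg ha, abs_of_nonneg (ha.trans hab),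
      max_eq_left hab] at this
  calc μ.real (Metric.closedBall x b \ Metric.ball x a)
      = (b ^ n - a ^ n) * μ.real (Metric.ball 0 1) := by
        rw [measureReal_sdiff (Metric.ball_subset_closedBall.trans
            (Metric.closedBall_subset_closedBall hab)) measurableSet_ball
            measure_closedBall_lt_top.ne,
          ← Measure.addHaar_real_closedBall_eq_addHaar_real_ball μ x a,
          Measure.addHaar_real_closedBall _ _ (ha.trans hab),
          Measure.addHaar_real_closedBall _ _ ha, sub_mul]
    _ ≤ (b - a) * n * b ^ (n - 1) * μ.real (Metric.ball 0 1) := by gcongr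
    _ = μ.real (Metric.ball 0 1) * n * b ^ (n - 1) * (b - a) := by ring

lemma volume_unitAddTorus_le {ι : Type*} [Fintype ι] {s : Set (UnitAddTorus ι)}
    (hs : MeasurableSet s) {t : Set (ι → ℝ)}
    (hst : ∀ y : ι → ℝ, (∀ i, |y i| ≤ 1 / 2) → (fun i ↦ (y i : UnitAddCircle)) ∈ s → y ∈ t) :
    volume s ≤ volume t := by
  have coe_preserving : MeasurePreserving (fun (y : ι → ℝ) i ↦ (y i : UnitAddCircle))
      (volume.restrict (Set.univ.pi fun _ ↦ Set.Ioc (-(1 / 2)) (-(1 / 2) + 1))) volume := by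
    rw [volume_pi, Measure.restrict_pi_pi]
    exact measurePreserving_pi _ _ fun _ ↦ AddCircle.measurePreserving_mk 1 (-(1 / 2))
  rw [← coe_preserving.measure_preimage hs.nullMeasurableSet,
    Measure.restrict_apply (coe_preserving.measurable hs)]
  refine measure_mono fun y hy ↦ hst y (fun i ↦ ?_) hy.1
  have y_mem := hy.2 i (Set.mem_univ i)
  exact abs_le.mpr ⟨y_mem.1.le, by linarith [y_mem.2]⟩

lemma volume_real_torusAnnulus_le_of_nonneg (hd : 0 < d) {a b : ℝ} (ha : 0 ≤ a) (hab : a ≤ b) :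
    volume.real (torusAnnulus a b : Set (Fin d → AddCircle (1 : ℝ))) ≤
      volume.real (Metric.ball (0 : EuclideanSpace ℝ (Fin d)) 1) * d * b ^ (d - 1) * (b - a) := by
  have : Nonempty (Fin d) := ⟨⟨0, hd⟩⟩
  set shell : Set (EuclideanSpace ℝ (Fin d)) := Metric.closedBall 0 b \ Metric.ball 0 a
  have shell_ne_top : volume shell ≠ ⊤ :=
    measure_ne_top_of_subset Set.sdiff_subset measure_closedBall_lt_top.ne
  have volume_le : volume.real (torusAnnulus a b : Set (Fin d → AddCircle (1 : ℝ))) ≤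
      volume.real shell := by
    refine ENNReal.toReal_mono shell_ne_top ?_
    rw [← (PiLp.volume_preserving_toLp (Fin d)).measure_preimage
      (measurableSet_closedBall.diff measurableSet_ball).nullMeasurableSet]
    refine volume_unitAddTorus_le (measurableSet_torusAnnulus a b) fun y hy hy' ↦ ?_
    rw [torusAnnulus, Set.mem_ofPred_eq, torusNorm_coe hy] at hy'
    simpa [shell, and_comm] using hy'
  simpa only [finrank_euclideanSpace_fin] using
    volume_le.trans (addHaar_real_closedBall_sdiff_ball_le volume 0 ha hab)

lemma volume_real_torusAnnulus_le (hd : 0 < d) {a b : ℝ} (hab : a ≤ b) :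
    volume.real (torusAnnulus a b : Set (Fin d → AddCircle (1 : ℝ))) ≤
      volume.real (Metric.ball (0 : EuclideanSpace ℝ (Fin d)) 1) * d * √d ^ (d - 1) * (b - a) := by
  have sqrt_nonneg : 0 ≤ √(d : ℝ) := Real.sqrt_nonneg _
  set clamp := Set.projIcc 0 √(d : ℝ) sqrt_nonneg
  have clamp_mono : Monotone clamp := Set.monotone_projIcc _
  have clamp_sub_le : (clamp b : ℝ) - clamp a ≤ b - a :=
    (le_abs_self _).trans <| (Set.abs_projIcc_sub_projIcc sqrt_nonneg).trans_eq <|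
      abs_of_nonneg (sub_nonneg.mpr hab)
  have subset_clamp : torusAnnulus a b ⊆
      (torusAnnulus (clamp a) (clamp b) : Set (Fin d → AddCircle (1 : ℝ))) := by
    rintro x ⟨hax, hxb⟩
    have clamp_torusNorm : (clamp (torusNorm x) : ℝ) = torusNorm x := congrArg Subtype.val <|
      Set.projIcc_of_mem sqrt_nonneg ⟨Real.sqrt_nonneg _, torusNorm_le_sqrt x⟩
    constructor <;> rw [← clamp_torusNorm]
    exacts [clamp_mono hax, clamp_mono hxb]
  refine (measureReal_mono subset_clamp).trans <|
    (volume_real_torusAnnulus_le_of_nonneg hd (clamp a).2.1 (clamp_mono hab)).trans ?_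
  gcongr
  exacts [sub_nonneg.mpr (clamp_mono hab), (clamp b).2.1, (clamp b).2.2]

lemma boundaryLayer_torusAnnulus_subset (r a b : ℝ) :
    boundaryLayer r (torusAnnulus a b : Set (Fin d → AddCircle (1 : ℝ))) ⊆
      torusAnnulus (a - √d * r) (a + √d * r) ∪ torusAnnulus (b - √d * r) (b + √d * r) := by
  rintro x ⟨hxA, hxA'⟩
  obtain ⟨y, ⟨hay, hyb⟩, hxy⟩ := Metric.mem_thickening_iff.mp hxA
  obtain ⟨z, hz, hxz⟩ := Metric.mem_thickening_iff.mp hxA'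
  have near {w : Fin d → AddCircle (1 : ℝ)} (hxw : dist x w < r) :
      |torusNorm x - torusNorm w| ≤ √d * r :=
    (abs_torusNorm_sub_torusNorm_le x w).trans (by gcongr)
  obtain ⟨hy₁, hy₂⟩ := abs_le.mp (near hxy)
  obtain ⟨hz₁, hz₂⟩ := abs_le.mp (near hxz)
  rcases lt_or_ge (torusNorm z) a with hza | haz
  · exact Or.inl ⟨by linarith, by linarith⟩
  · have hbz : b < torusNorm z := not_le.mp fun hzb ↦ hz ⟨haz, hzb⟩
    exact Or.inr ⟨by linarith, by linarith⟩

lemma exists_volume_real_boundaryLayer_torusAnnulus_le (hd : 0 < d) :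
    ∃ C : ℝ, ∀ a b r : ℝ, 0 ≤ r →
      volume.real (boundaryLayer r (torusAnnulus a b : Set (Fin d → AddCircle (1 : ℝ)))) ≤
        C * r := by
  refine ⟨4 * √d * (volume.real (Metric.ball (0 : EuclideanSpace ℝ (Fin d)) 1) * d *
    √d ^ (d - 1)), fun a b r hr ↦ ?_⟩
  have shell_le (c : ℝ) := volume_real_torusAnnulus_le hd
    (show c - √d * r ≤ c + √d * r by nlinarith [Real.sqrt_nonneg d])
  refine (measureReal_mono (boundaryLayer_torusAnnulus_subset r a b)).trans <|
    (measureReal_union_le _ _).trans <| (add_le_add (shell_le a) (shell_le b)).trans_eq (by ring)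

end Annulus

section UniformDistribution

variable {d : ℕ} {γ : ℝ} {v : ℕ → Fin d → AddCircle (1 : ℝ)}

lemma IsGammaUDTorus.exists_norm_expSum_sq_le (hUD : IsGammaUDTorus γ v) {σ : ℝ} (hσ : 0 < σ) :
    ∃ L, 0 ≤ L ∧ ∀ N : ℕ, 1 ≤ N → ∀ k ≠ 0,
      ‖expSum (range N) v k‖ ^ 2 ≤ L * (N : ℝ) ^ (2 - 2 * γ) * freqWeight σ k := by
  obtain ⟨c, _, hc⟩ := hUD (σ / 2) (half_pos hσ)
  refine ⟨c ^ 2, sq_nonneg c, fun N hN k hk ↦ ?_⟩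
  have N_pos : (0 : ℝ) < N := Nat.cast_pos.mpr hN
  have intNorm_nonneg : 0 ≤ intNorm k := Real.sqrt_nonneg _
  have norm_expSum_le :
      ‖expSum (range N) v k‖ ≤ N * (c * intNorm k ^ (σ / 2) * (N : ℝ) ^ (-γ)) := by
    have := hc k hk N hN
    rwa [norm_mul, norm_inv, Complex.norm_natCast, inv_mul_le_iff₀ N_pos] at this
  calc ‖expSum (range N) v k‖ ^ 2
      ≤ (N * (c * intNorm k ^ (σ / 2) * (N : ℝ) ^ (-γ))) ^ 2 := by gcongr
    _ = c ^ 2 * (N : ℝ) ^ (2 - 2 * γ) * intNorm k ^ σ := by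
        have sq_intNorm : (intNorm k ^ (σ / 2)) ^ 2 = intNorm k ^ σ := by
          rw [← Real.rpow_mul_natCast intNorm_nonneg, Nat.cast_two, div_mul_cancel₀ _ two_ne_zero]
        have sq_rpow : (N * (N : ℝ) ^ (-γ)) ^ 2 = (N : ℝ) ^ (2 - 2 * γ) := by
          rw [mul_pow, ← Real.rpow_mul_natCast N_pos.le, ← Real.rpow_two, ← Real.rpow_add N_pos]
          push_cast
          ring_nf
        rw [← sq_intNorm, ← sq_rpow]
        ring
    _ ≤ c ^ 2 * (N : ℝ) ^ (2 - 2 * γ) * freqWeight σ k := by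
        gcongr
        exact intNorm_rpow_le_freqWeight hσ.le k

lemma exists_half_pow_near {x α p : ℝ} (hx : 1 ≤ x) (hα : 0 ≤ α) (hp : 0 ≤ p) :
    ∃ j : ℕ, (1 / 2 : ℝ) ^ (j + 1) ≤ x ^ (-α) ∧ ((2 : ℝ) ^ p) ^ j ≤ x ^ (α * p) := by
  have x_pos : 0 < x := one_pos.trans_le hx
  obtain ⟨j, hj, hj'⟩ := exists_nat_pow_near_of_lt_one (Real.rpow_pos_of_pos x_pos (-α))
    (Real.rpow_le_one_of_one_le_of_nonpos hx (neg_nonpos.mpr hα)) one_half_pos one_half_lt_one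
  refine ⟨j, hj.le, ?_⟩
  have two_pow_le : (2 : ℝ) ^ j ≤ x ^ α := by
    rw [Real.rpow_neg x_pos.le, one_div, inv_pow] at hj'
    exact (inv_le_inv₀ (by positivity) (by positivity)).mp hj'
  calc ((2 : ℝ) ^ p) ^ j = ((2 : ℝ) ^ j) ^ p := by
        rw [← Real.rpow_mul_natCast zero_le_two, ← Real.rpow_natCast_mul zero_le_two, mul_comm]
    _ ≤ (x ^ α) ^ p := Real.rpow_le_rpow (by positivity) two_pow_le hp
    _ = x ^ (α * p) := (Real.rpow_mul x_pos.le α p).symm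

lemma exists_scale_errors_le (hd : 0 < d) {ε σ x : ℝ} (hγ : 0 ≤ γ) (hε : 0 ≤ ε) (hσ : 0 ≤ σ)
    (hσε : 6 * γ * σ ≤ ε) (hx : 1 ≤ x) :
    ∃ j : ℕ, x ^ 2 * (1 / 2) ^ (j + 1) ≤ x ^ (2 - 4 * γ / (d + 1) + ε) ∧
      x ^ (2 - 2 * γ) * ((2 : ℝ) ^ ((d * (1 + 3 * σ) - 1) / 2)) ^ j ≤
        x ^ (2 - 4 * γ / (d + 1) + ε) := by
  set α := 4 * γ / (d + 1)
  set p := (d * (1 + 3 * σ) - 1) / 2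
  have x_pos : 0 < x := one_pos.trans_le hx
  have p_nonneg : 0 ≤ p := by
    have : (1 : ℝ) ≤ d := Nat.one_le_cast.mpr hd
    exact div_nonneg (by nlinarith) zero_le_two
  have exponent_le : 2 - 2 * γ + α * p ≤ 2 - α + ε := by
    have α_mul : α * (d + 1) = 4 * γ := div_mul_cancel₀ _ (by positivity)
    have α_nonneg : 0 ≤ α := by positivity
    have two_mul_p : 2 * p = d * (1 + 3 * σ) - 1 := mul_div_cancel₀ _ two_ne_zero
    nlinarith [mul_nonneg α_nonneg hσ]
  obtain ⟨j, half_pow_le, pow_le⟩ := exists_half_pow_near hx (by positivity : 0 ≤ α) p_nonneg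
  refine ⟨j, ?_, ?_⟩
  · calc x ^ 2 * (1 / 2) ^ (j + 1) ≤ x ^ (2 : ℝ) * x ^ (-α) := by
          rw [Real.rpow_two]
          gcongr
      _ = x ^ (2 - α) := by rw [← Real.rpow_add x_pos, sub_eq_add_neg]
      _ ≤ x ^ (2 - α + ε) := Real.rpow_le_rpow_of_exponent_le hx (by linarith)
  · calc x ^ (2 - 2 * γ) * ((2 : ℝ) ^ p) ^ j ≤ x ^ (2 - 2 * γ) * x ^ (α * p) := by gcongr
      _ = x ^ (2 - 2 * γ + α * p) := (Real.rpow_add x_pos _ _).symm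
      _ ≤ x ^ (2 - α + ε) := Real.rpow_le_rpow_of_exponent_le hx exponent_le

open scoped Classical in
theorem IsGammaUDTorus.exists_abs_card_filter_mem_sub_le (hUD : IsGammaUDTorus γ v) (hd : 0 < d)
    (hγ : 0 ≤ γ) (C : ℝ) {ε : ℝ} (hε : 0 < ε) :
    ∃ K, 0 < K ∧ ∀ A : Set (Fin d → AddCircle (1 : ℝ)), MeasurableSet A →
      (∀ r > 0, volume.real (boundaryLayer r A) ≤ C * r) → ∀ N : ℕ, 1 ≤ N →
      |(#{p ∈ range N ×ˢ range N | v p.1 - v p.2 ∈ A} : ℝ) - (N : ℝ) ^ 2 * volume.real A| ≤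
        K * (N : ℝ) ^ (2 - 4 * γ / (d + 1) + ε) := by
  have : Nonempty (Fin d) := ⟨⟨0, hd⟩⟩
  set σ := min (1 / 3) (ε / (6 * γ + 1))
  have σ_pos : 0 < σ := lt_min (by norm_num) (by positivity)
  have σ_le_third : σ ≤ 1 / 3 := min_le_left _ _
  have σ_le : 6 * γ * σ ≤ ε := by
    have := (le_div_iff₀ (by positivity)).mp (min_le_right (1 / 3) (ε / (6 * γ + 1)))
    linarith
  obtain ⟨L, L_nonneg, hL⟩ := hUD.exists_norm_expSum_sq_le σ_pos
  obtain ⟨K, K_nonneg, hK⟩ := exists_abs_card_filter_mem_sub_le_of_norm_expSum_sq_le (ι := Fin d)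
    (α := ℕ) C σ_pos.le (by linarith : 1 + 3 * σ ≤ 2) (by linarith)
  refine ⟨3 * |C| + K * L + 1, by positivity, fun A hA hC N hN ↦ ?_⟩
  obtain ⟨j, spatial_error, spectral_error⟩ :=
    exists_scale_errors_le hd hγ hε.le σ_pos.le σ_le (Nat.one_le_cast.mpr hN : (1 : ℝ) ≤ N)
  have card_le := hK A hA hC (range N) v (L * (N : ℝ) ^ (2 - 2 * γ)) (by positivity) (hL N hN) j
  rw [card_range, Fintype.card_fin] at card_le
  set M := (N : ℝ) ^ (2 - 4 * γ / (d + 1) + ε)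
  have M_nonneg : 0 ≤ M := by positivity
  set R := (2 : ℝ) ^ ((d * (1 + 3 * σ) - 1) / 2)
  refine card_le.trans ?_
  calc 3 * C * (N : ℝ) ^ 2 * (1 / 2) ^ (j + 1) + K * (L * (N : ℝ) ^ (2 - 2 * γ)) * R ^ j
      ≤ 3 * |C| * (N : ℝ) ^ 2 * (1 / 2) ^ (j + 1) + K * (L * (N : ℝ) ^ (2 - 2 * γ)) * R ^ j := by
        gcongr
        exact le_abs_self C
    _ = 3 * |C| * ((N : ℝ) ^ 2 * (1 / 2) ^ (j + 1)) +
          K * L * ((N : ℝ) ^ (2 - 2 * γ) * R ^ j) := by ring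
    _ ≤ 3 * |C| * M + K * L * M := by gcongr
    _ ≤ (3 * |C| + K * L + 1) * M := by linarith

end UniformDistribution

open scoped Classical in
theorem stmt9_general (d : ℕ) (hd : 0 < d) (γ : ℝ) (hγ : 0 ≤ γ)
    (v : ℕ → Fin d → AddCircle (1 : ℝ)) (hUD : IsGammaUDTorus γ v) :
    ∀ ε : ℝ, 0 < ε → ∃ C : ℝ, 0 < C ∧ ∀ a b : ℝ, ∀ N : ℕ, 1 ≤ N →
      |(((range N ×ˢ range N).filter
            (fun p ↦ a ≤ torusNorm (v p.1 - v p.2) ∧ torusNorm (v p.1 - v p.2) ≤ b)).card : ℝ)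
          - (N : ℝ) ^ 2 *
            (volume {x : Fin d → AddCircle (1 : ℝ) | a ≤ torusNorm x ∧ torusNorm x ≤ b}).toReal|
        ≤ C * (N : ℝ) ^ (2 - 4 * γ / (d + 1) + ε) := by
  intro ε hε
  obtain ⟨C, hC⟩ := exists_volume_real_boundaryLayer_torusAnnulus_le hd
  obtain ⟨K, K_pos, hK⟩ := hUD.exists_abs_card_filter_mem_sub_le hd hγ C hε
  refine ⟨K, K_pos, fun a b N hN ↦ ?_⟩
  convert hK (torusAnnulus a b) (measurableSet_torusAnnulus a b) (fun r hr ↦ hC a b r hr.le) N hN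
  · exact Iff.rfl
  · rfl

open scoped Classical in
/-- Annulus incidence theorem: for a `γ`-uniformly distributed sequence on `𝕋^d`,
`#{(n,m) : a ≤ ‖v_n - v_m‖ ≤ b} = N² |A_{[a,b]}| + O_ε(N^{2 - 4γ/(d+1) + ε})`. -/
theorem stmt9 (d : ℕ) (hd : 2 ≤ d) (γ : ℝ) (hγ : γ ∈ Set.Ioc (0:ℝ) (1/2))
    (v : ℕ → Fin d → AddCircle (1:ℝ)) (hUD : IsGammaUDTorus γ v) :
    ∀ ε : ℝ, 0 < ε → ∃ C : ℝ, 0 < C ∧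
      ∀ a b : ℝ, 1/100 ≤ a → a ≤ b → b < 1/2 → ∀ N : ℕ, 1 ≤ N →
        |((((Finset.range N) ×ˢ (Finset.range N)).filter
              (fun p => a ≤ torusNorm (v p.1 - v p.2) ∧ torusNorm (v p.1 - v p.2) ≤ b)).card : ℝ)
            - (N : ℝ) ^ 2 *
              (volume {x : Fin d → AddCircle (1:ℝ) | a ≤ torusNorm x ∧ torusNorm x ≤ b}).toReal|
          ≤ C * (N : ℝ) ^ (2 - 4*γ/(d+1) + ε) := by
  intro ε hε
  obtain ⟨C, C_pos, hC⟩ := stmt9_general d (two_pos.trans_le hd) γ hγ.1.le v hUD ε hε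
  exact ⟨C, C_pos, fun a b _ _ _ ↦ hC a b⟩
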